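/- Let W ∈ L^∞((0,1)²) be nonnegative and symmetric, and let ε_k → 0⁺. On the set Y of Young measures ν with ν_x([−1,1]) = 1 for a.e. x, the graphon Ginzburg–Landau functionals GL^W_{ε_k} Γ-converge to the graphon total-variation functional TV^W with respect to narrow convergence of Young measures. -/

import Mathlib

open MeasureTheory Filter
open scoped Classical

noncomputable section

/-- The open unit interval `(0,1)` as a subset of `ℝ`. -/
def I01 : Set ℝ := Set.Ioo 0 1

/-- The double-well potential `Φ(s) = (s² − 1)²`. -/
def Phi (s : ℝ) : ℝ := (s ^ 2 - 1) ^ 2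

/-- A Young measure on `(0,1)`: a measurable family of Borel probability measures on `ℝ`. -/
def IsYoungMeasure (ν : ℝ → Measure ℝ) : Prop :=
  Measurable ν ∧ ∀ x, IsProbabilityMeasure (ν x)

/-- The type of Young measures `ν` with `ν_x([−1,1]) = 1` for a.e. `x ∈ (0,1)`. -/
def YMb := {ν : ℝ → Measure ℝ // IsYoungMeasure ν ∧
  ∀ᵐ x ∂(volume.restrict I01), ν x (Set.Icc (-1 : ℝ) 1) = 1}

/-- Narrow convergence of Young measures. -/
def NarrowConv (ν : ℕ → ℝ → Measure ℝ) (μ : ℝ → Measure ℝ) : Prop :=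
  ∀ f : ℝ → ℝ, Continuous f → (∃ C, ∀ s, |f s| ≤ C) →
    ∀ g : ℝ → ℝ, IntegrableOn g I01 →
      Tendsto (fun n => ∫ x in I01, g x * ∫ t, f t ∂(ν n x)) atTop
        (nhds (∫ x in I01, g x * ∫ t, f t ∂(μ x)))

/-- The graphon Dirichlet energy of a Young measure. -/
def graphonDirichlet (V : ℝ → ℝ → ℝ) (ν : ℝ → Measure ℝ) : ℝ :=
  ∫ x in I01, ∫ y in I01, V x y * ∫ t, (∫ s, |s - t| ^ 2 ∂(ν x)) ∂(ν y)

/-- The graphon Ginzburg–Landau functional on Young measures. -/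
def graphonGL (W : ℝ → ℝ → ℝ) (ε : ℝ) (ν : ℝ → Measure ℝ) : ℝ :=
  graphonDirichlet W ν + (1 / ε) * ∫ x in I01, ∫ t, Phi t ∂(ν x)

/-- The graphon total-variation functional on Young measures. -/
def graphonTV (V : ℝ → ℝ → ℝ) (ν : ℝ → Measure ℝ) : EReal :=
  if ∀ᵐ x ∂(volume.restrict I01), ν x ({-1, 1} : Set ℝ) = 1 then
    ((2 * ∫ x in I01, ∫ y in I01,
        V x y * ∫ t, (∫ s, |s - t| ∂(ν x)) ∂(ν y) : ℝ) : EReal)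
  else ⊤

/-- Γ-convergence of functionals with values in `ℝ ∪ {±∞}`. -/
def GammaConv {X : Type*} (conv : (ℕ → X) → X → Prop)
    (F : ℕ → X → EReal) (Flim : X → EReal) : Prop :=
  (∀ (xs : ℕ → X) (x : X), conv xs x →
      Flim x ≤ Filter.liminf (fun n => F n (xs n)) Filter.atTop) ∧
  (∀ x : X, ∃ xs : ℕ → X, conv xs x ∧
      Filter.limsup (fun n => F n (xs n)) Filter.atTop ≤ Flim x)

/-- Clamp to `[-1,1]`. -/
def clampP (s : ℝ) : ℝ := max (-1) (min s 1)

lemma clampP_cont : Continuous clampP := by unfold clampP; fun_prop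

lemma clampP_abs (s : ℝ) : |clampP s| ≤ 1 := by
  unfold clampP
  rw [abs_le]
  exact ⟨le_max_left _ _, max_le (by norm_num) (min_le_right _ _)⟩

lemma clampP_sq_abs (s : ℝ) : |clampP s ^ 2| ≤ 1 := by
  rw [abs_pow]
  exact pow_le_one₀ (abs_nonneg _) (clampP_abs s)

lemma clampP_eq {s : ℝ} (h : s ∈ Set.Icc (-1 : ℝ) 1) : clampP s = s := by
  unfold clampP
  rw [min_eq_left h.2, max_eq_right h.1]

lemma phi_clamp_abs (s : ℝ) : |Phi (clampP s)| ≤ 1 := by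
  have h := clampP_sq_abs s
  rw [abs_of_nonneg (sq_nonneg _)] at h
  unfold Phi
  rw [abs_le]
  constructor <;> nlinarith [sq_nonneg (clampP s), sq_nonneg (clampP s ^ 2 - 1)]

lemma phi_clamp_cont : Continuous (fun s => Phi (clampP s)) := by
  unfold Phi
  have := clampP_cont
  fun_prop

lemma young_meas {ν : ℝ → Measure ℝ} (hν : IsYoungMeasure ν) {f : ℝ → ℝ} (hf : Continuous f) :
    Measurable (fun x => ∫ t, f t ∂(ν x)) := by
  let κ : ProbabilityTheory.Kernel ℝ ℝ := ⟨ν, hν.1⟩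
  exact (hf.stronglyMeasurable.integral_kernel (κ := κ)).measurable

lemma young_int {ν : ℝ → Measure ℝ} (hν : IsYoungMeasure ν) {f : ℝ → ℝ} (hf : Continuous f)
    {C : ℝ} (hC : ∀ s, |f s| ≤ C) (x : ℝ) : Integrable f (ν x) := by
  have := hν.2 x
  exact Integrable.of_bound hf.aestronglyMeasurable C (Eventually.of_forall hC)

lemma young_abs {ν : ℝ → Measure ℝ} (hν : IsYoungMeasure ν) {f : ℝ → ℝ}
    {C : ℝ} (hC : ∀ s, |f s| ≤ C) (x : ℝ) : |∫ t, f t ∂(ν x)| ≤ C := by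
  have := hν.2 x
  have h := norm_integral_le_of_norm_le_const (μ := ν x) (f := f) (C := C)
    (Eventually.of_forall hC)
  simpa using h

/-- The bilinear form attached to the graphon. -/
def bilW (W : ℝ → ℝ → ℝ) (a b : ℝ → ℝ) : ℝ :=
  ∫ x in I01, a x * ∫ y in I01, W x y * b y

instance finI01 : IsFiniteMeasure (volume.restrict I01 : Measure ℝ) := by
  unfold I01
  infer_instance

lemma volI01 : (volume.restrict I01 : Measure ℝ).real Set.univ = 1 := by
  simp [I01, Measure.real]

lemma inner_meas {W : ℝ → ℝ → ℝ} (hW : Measurable (Function.uncurry W)) {b : ℝ → ℝ}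
    (hb : Measurable b) : Measurable (fun x => ∫ y in I01, W x y * b y) := by
  have h : StronglyMeasurable (fun p : ℝ × ℝ => W p.1 p.2 * b p.2) :=
    (hW.mul (hb.comp measurable_snd)).stronglyMeasurable
  exact (h.integral_prod_right (ν := volume.restrict I01)).measurable

lemma W_int {W : ℝ → ℝ → ℝ} (hW : Measurable (Function.uncurry W)) {C : ℝ}
    (hC : ∀ x y, |W x y| ≤ C) (x : ℝ) : IntegrableOn (fun y => W x y) I01 := by
  have hm : Measurable (fun y => W x y) := hW.comp measurable_prodMk_left
  exact Integrable.of_bound hm.aestronglyMeasurable C (Eventually.of_forall (hC x))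

lemma Wb_int {W : ℝ → ℝ → ℝ} (hW : Measurable (Function.uncurry W)) {C : ℝ}
    (hC : ∀ x y, |W x y| ≤ C) {b : ℝ → ℝ} (hb : Measurable b) (hb1 : ∀ x, |b x| ≤ 1) (x : ℝ) :
    IntegrableOn (fun y => W x y * b y) I01 := by
  have h := (W_int hW hC x).bdd_mul (f := b) (c := 1) hb.aestronglyMeasurable
    (Eventually.of_forall hb1)
  simp only [mul_comm (b _)] at h
  exact h

lemma inner_abs {W : ℝ → ℝ → ℝ} {C : ℝ}
    (hC : ∀ x y, |W x y| ≤ C) {b : ℝ → ℝ} (hb1 : ∀ x, |b x| ≤ 1) (x : ℝ) :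
    |∫ y in I01, W x y * b y| ≤ C := by
  have h := norm_integral_le_of_norm_le_const (μ := volume.restrict I01)
    (f := fun y => W x y * b y) (C := C) (Eventually.of_forall (fun y => by
      rw [Real.norm_eq_abs, abs_mul]
      exact (mul_le_of_le_one_right (abs_nonneg _) (hb1 y)).trans (hC x y)))
  rw [volI01] at h
  simpa using h

lemma inner_int {W : ℝ → ℝ → ℝ} (hW : Measurable (Function.uncurry W)) {C : ℝ}
    (hC : ∀ x y, |W x y| ≤ C) {b : ℝ → ℝ} (hb : Measurable b) (hb1 : ∀ x, |b x| ≤ 1) :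
    IntegrableOn (fun x => ∫ y in I01, W x y * b y) I01 :=
  Integrable.of_bound (inner_meas hW hb).aestronglyMeasurable C
    (Eventually.of_forall (inner_abs hC hb1))

lemma outer_int {W : ℝ → ℝ → ℝ} (hW : Measurable (Function.uncurry W)) {C : ℝ}
    (hC : ∀ x y, |W x y| ≤ C) {a b : ℝ → ℝ} (ha : Measurable a) (ha1 : ∀ x, |a x| ≤ 1)
    (hb : Measurable b) (hb1 : ∀ x, |b x| ≤ 1) :
    IntegrableOn (fun x => a x * ∫ y in I01, W x y * b y) I01 :=
  (inner_int hW hC hb hb1).bdd_mul (f := a) (c := 1) ha.aestronglyMeasurable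
    (Eventually.of_forall ha1)

lemma bilW_tendsto {W : ℝ → ℝ → ℝ} (hW : Measurable (Function.uncurry W)) {C : ℝ}
    (hC : ∀ x y, |W x y| ≤ C) {a b : ℕ → ℝ → ℝ} {a' b' : ℝ → ℝ}
    (ha : ∀ n, Measurable (a n)) (ha1 : ∀ n x, |a n x| ≤ 1)
    (hb : ∀ n, Measurable (b n)) (hb1 : ∀ n x, |b n x| ≤ 1)
    (hb' : Measurable b') (hb1' : ∀ x, |b' x| ≤ 1)
    (hat : ∀ g : ℝ → ℝ, IntegrableOn g I01 →
      Tendsto (fun n => ∫ x in I01, g x * a n x) atTop (nhds (∫ x in I01, g x * a' x)))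
    (hbt : ∀ g : ℝ → ℝ, IntegrableOn g I01 →
      Tendsto (fun n => ∫ x in I01, g x * b n x) atTop (nhds (∫ x in I01, g x * b' x))) :
    Tendsto (fun n => bilW W (a n) (b n)) atTop (nhds (bilW W a' b')) := by
  have h1 : Tendsto (fun n => bilW W (a n) b') atTop (nhds (bilW W a' b')) := by
    have := hat _ (inner_int hW hC hb' hb1')
    simpa only [bilW, mul_comm] using this
  have h2 : Tendsto (fun n => bilW W (a n) (b n) - bilW W (a n) b') atTop (nhds 0) := by
    have key : ∀ n, bilW W (a n) (b n) - bilW W (a n) b' =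
        ∫ x in I01, a n x * ((∫ y in I01, W x y * b n y) - ∫ y in I01, W x y * b' y) := by
      intro n
      unfold bilW
      rw [← integral_sub (outer_int hW hC (ha n) (ha1 n) (hb n) (hb1 n))
        (outer_int hW hC (ha n) (ha1 n) hb' hb1')]
      simp only [mul_sub]
    simp only [key]
    have : (0 : ℝ) = ∫ x in I01, (0 : ℝ) := by simp
    rw [this]
    refine tendsto_integral_of_dominated_convergence (fun _ => 2 * C) ?_ ?_ ?_ ?_
    · intro n
      exact ((ha n).mul ((inner_meas hW (hb n)).sub (inner_meas hW hb'))).aestronglyMeasurable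
    · exact integrable_const _
    · intro n
      refine Eventually.of_forall fun x => ?_
      rw [Real.norm_eq_abs, abs_mul]
      refine (mul_le_of_le_one_left (abs_nonneg _) (ha1 n x)).trans ?_
      refine (abs_sub _ _).trans ?_
      linarith [inner_abs hC (hb1 n) x, inner_abs hC hb1' x]
    · refine Eventually.of_forall fun x => ?_
      have h := (hbt _ (W_int hW hC x)).sub_const (∫ y in I01, W x y * b' y)
      rw [sub_self] at h
      refine squeeze_zero_norm (fun n => ?_) (tendsto_zero_iff_norm_tendsto_zero.1 h)
      rw [norm_mul]
      exact mul_le_of_le_one_left (norm_nonneg _) (ha1 n x)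
  simpa using h2.add h1

lemma young_ae {μ : Measure ℝ} [IsProbabilityMeasure μ]
    (h : μ (Set.Icc (-1 : ℝ) 1) = 1) : ∀ᵐ s ∂μ, clampP s = s := by
  have := (mem_ae_iff_prob_eq_one (μ := μ) measurableSet_Icc).2 h
  filter_upwards [this] with s hs using clampP_eq hs

lemma integral_three {μ : Measure ℝ} {f g h : ℝ → ℝ} (hf : Integrable f μ)
    (hg : Integrable g μ) (hh : Integrable h μ) :
    (∫ x, (f x - g x + h x) ∂μ) = (∫ x, f x ∂μ) - (∫ x, g x ∂μ) + ∫ x, h x ∂μ := by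
  have e := integral_add (hf.sub hg) hh
  simp only [Pi.sub_apply] at e
  rw [e, integral_sub hf hg]

lemma dirichlet_eq {W : ℝ → ℝ → ℝ} (hW : Measurable (Function.uncurry W)) {C : ℝ}
    (hC : ∀ x y, |W x y| ≤ C) (ν : YMb) :
    graphonDirichlet W ν.1 =
      bilW W (fun x => ∫ t, clampP t ^ 2 ∂(ν.1 x)) (fun _ => 1)
      - 2 * bilW W (fun x => ∫ t, clampP t ∂(ν.1 x)) (fun x => ∫ t, clampP t ∂(ν.1 x))
      + bilW W (fun _ => 1) (fun x => ∫ t, clampP t ^ 2 ∂(ν.1 x)) := by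
  obtain ⟨ν, hν, hI⟩ := ν
  simp only
  have hc2 : Continuous (fun t => clampP t ^ 2) := clampP_cont.pow 2
  set a : ℝ → ℝ := fun x => ∫ t, clampP t ∂(ν x) with ha
  set q : ℝ → ℝ := fun x => ∫ t, clampP t ^ 2 ∂(ν x) with hq
  have ham : Measurable a := young_meas hν clampP_cont
  have hqm : Measurable q := young_meas hν hc2
  have ha1 : ∀ x, |a x| ≤ 1 := young_abs hν clampP_abs
  have hq1 : ∀ x, |q x| ≤ 1 := young_abs hν clampP_sq_abs
  have h1m : Measurable (fun _ : ℝ => (1 : ℝ)) := measurable_const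
  have h11 : ∀ x : ℝ, |(fun _ : ℝ => (1 : ℝ)) x| ≤ 1 := by simp
  have step : ∀ᵐ x ∂(volume.restrict I01), ∀ᵐ y ∂(volume.restrict I01),
      (∫ t, (∫ s, |s - t| ^ 2 ∂(ν x)) ∂(ν y)) = q x - 2 * (a x * a y) + q y := by
    filter_upwards [hI] with x hx
    filter_upwards [hI] with y hy
    have := hν.2 x
    have := hν.2 y
    have i1 : ∀ z, Integrable clampP (ν z) := young_int hν clampP_cont clampP_abs
    have i2 : ∀ z, Integrable (fun t => clampP t ^ 2) (ν z) := young_int hν hc2 clampP_sq_abs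
    have e1 : ∀ t, (∫ s, |s - t| ^ 2 ∂(ν x)) = q x - 2 * t * a x + t ^ 2 := by
      intro t
      have : (∫ s, |s - t| ^ 2 ∂(ν x)) = ∫ s, (clampP s ^ 2 - 2 * t * clampP s + t ^ 2) ∂(ν x) := by
        refine integral_congr_ae ?_
        filter_upwards [young_ae hx] with s hs
        rw [hs, sq_abs]; ring
      rw [this, integral_three (i2 x) ((i1 x).const_mul _) (integrable_const _),
        integral_const_mul]
      simp [ha, hq]
    simp only [e1]
    have : (∫ t, (q x - 2 * t * a x + t ^ 2) ∂(ν y)) =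
        ∫ t, (q x - 2 * a x * clampP t + clampP t ^ 2) ∂(ν y) := by
      refine integral_congr_ae ?_
      filter_upwards [young_ae hy] with s hs
      rw [hs]; ring
    rw [this, integral_three (integrable_const _) ((i1 y).const_mul _) (i2 y),
        integral_const_mul]
    simp [ha, hq]; ring
  have step2 : graphonDirichlet W ν = ∫ x in I01,
      (q x * (∫ y in I01, W x y * 1) - 2 * (a x * ∫ y in I01, W x y * a y)
        + 1 * ∫ y in I01, W x y * q y) := by
    unfold graphonDirichlet
    refine integral_congr_ae ?_
    filter_upwards [step] with x hx
    have : (∫ y in I01, W x y * ∫ t, (∫ s, |s - t| ^ 2 ∂(ν x)) ∂(ν y)) =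
        ∫ y in I01, (q x * (W x y * 1) - (2 * a x) * (W x y * a y) + W x y * q y) := by
      refine integral_congr_ae ?_
      filter_upwards [hx] with y hy
      rw [hy]; ring
    rw [this, integral_three
      ((Wb_int hW hC h1m h11 x).const_mul _) ((Wb_int hW hC ham ha1 x).const_mul _)
      (Wb_int hW hC hqm hq1 x),
      integral_const_mul, integral_const_mul]
    ring
  rw [step2]
  have o1 := outer_int hW hC hqm hq1 h1m h11
  have o2 := (outer_int hW hC ham ha1 ham ha1).const_mul 2
  have o3 := outer_int hW hC h1m h11 hqm hq1
  have e := integral_add (o1.sub o2) o3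
  have e' := integral_sub o1 o2
  simp only [Pi.sub_apply] at e
  rw [e, e', integral_const_mul]
  rfl

lemma dirichlet_tendsto {W : ℝ → ℝ → ℝ} (hW : Measurable (Function.uncurry W)) {C : ℝ}
    (hC : ∀ x y, |W x y| ≤ C) (νs : ℕ → YMb) (ν : YMb)
    (h : NarrowConv (fun n => (νs n).1) ν.1) :
    Tendsto (fun n => graphonDirichlet W (νs n).1) atTop (nhds (graphonDirichlet W ν.1)) := by
  simp only [dirichlet_eq hW hC]
  have hc2 : Continuous (fun t => clampP t ^ 2) := clampP_cont.pow 2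
  have ta := h clampP clampP_cont ⟨1, clampP_abs⟩
  have tq := h (fun t => clampP t ^ 2) hc2 ⟨1, clampP_sq_abs⟩
  have am : ∀ μ : YMb, Measurable (fun x => ∫ t, clampP t ∂(μ.1 x)) :=
    fun μ => young_meas μ.2.1 clampP_cont
  have qm : ∀ μ : YMb, Measurable (fun x => ∫ t, clampP t ^ 2 ∂(μ.1 x)) :=
    fun μ => young_meas μ.2.1 hc2
  have a1 : ∀ (μ : YMb) x, |∫ t, clampP t ∂(μ.1 x)| ≤ 1 :=
    fun μ => young_abs μ.2.1 clampP_abs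
  have q1 : ∀ (μ : YMb) x, |∫ t, clampP t ^ 2 ∂(μ.1 x)| ≤ 1 :=
    fun μ => young_abs μ.2.1 clampP_sq_abs
  have h1m : Measurable (fun _ : ℝ => (1 : ℝ)) := measurable_const
  have h11 : ∀ x : ℝ, |(fun _ : ℝ => (1 : ℝ)) x| ≤ 1 := by simp
  have t1 : ∀ g : ℝ → ℝ, IntegrableOn g I01 →
      Tendsto (fun _ : ℕ => ∫ x in I01, g x * (fun _ : ℝ => (1 : ℝ)) x) atTop
        (nhds (∫ x in I01, g x * (fun _ : ℝ => (1 : ℝ)) x)) := fun g _ => tendsto_const_nhds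
  refine Tendsto.add (Tendsto.sub ?_ (Tendsto.const_mul 2 ?_)) ?_
  · exact bilW_tendsto hW hC (fun n => qm _) (fun n => q1 _) (fun _ => h1m) (fun _ => h11)
      h1m h11 tq t1
  · exact bilW_tendsto hW hC (fun n => am _) (fun n => a1 _) (fun n => am _) (fun n => a1 _)
      (am _) (a1 _) ta ta
  · exact bilW_tendsto hW hC (fun _ => h1m) (fun _ => h11) (fun n => qm _) (fun n => q1 _)
      (qm _) (q1 _) t1 tq

lemma phi_eq (ν : YMb) : (∫ x in I01, ∫ t, Phi t ∂(ν.1 x)) =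
    ∫ x in I01, 1 * ∫ t, Phi (clampP t) ∂(ν.1 x) := by
  refine integral_congr_ae ?_
  filter_upwards [ν.2.2] with x hx
  have := ν.2.1.2 x
  rw [one_mul]
  refine integral_congr_ae ?_
  filter_upwards [young_ae hx] with s hs
  rw [hs]

lemma phi_nonneg (s : ℝ) : 0 ≤ Phi s := sq_nonneg _

lemma phi_int_nonneg (ν : ℝ → Measure ℝ) : 0 ≤ ∫ x in I01, ∫ t, Phi t ∂(ν x) :=
  integral_nonneg fun _ => integral_nonneg phi_nonneg

lemma dirichlet_nonneg {W : ℝ → ℝ → ℝ} (hW : ∀ x y, 0 ≤ W x y) (ν : ℝ → Measure ℝ) :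
    0 ≤ graphonDirichlet W ν :=
  integral_nonneg fun x => integral_nonneg fun y => mul_nonneg (hW x y)
    (integral_nonneg fun _ => integral_nonneg fun _ => sq_nonneg _)

lemma phi_tendsto (νs : ℕ → YMb) (ν : YMb) (h : NarrowConv (fun n => (νs n).1) ν.1) :
    Tendsto (fun n => ∫ x in I01, ∫ t, Phi t ∂((νs n).1 x)) atTop
      (nhds (∫ x in I01, ∫ t, Phi t ∂(ν.1 x))) := by
  simp only [phi_eq]
  exact h (fun s => Phi (clampP s)) phi_clamp_cont ⟨1, phi_clamp_abs⟩ (fun _ => 1)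
    (integrable_const _)

lemma phi_zero_iff (s : ℝ) : Phi s = 0 ↔ s ∈ ({-1, 1} : Set ℝ) := by
  unfold Phi
  rw [pow_eq_zero_iff two_ne_zero, sub_eq_zero, ← one_pow 2, sq_eq_sq_iff_eq_or_eq_neg]
  simp [or_comm]

lemma supp_of_phi_zero (ν : YMb) (h : (∫ x in I01, ∫ t, Phi t ∂(ν.1 x)) = 0) :
    ∀ᵐ x ∂(volume.restrict I01), ν.1 x ({-1, 1} : Set ℝ) = 1 := by
  rw [phi_eq] at h
  simp only [one_mul] at h
  have hm := young_meas ν.2.1 phi_clamp_cont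
  have hi : IntegrableOn (fun x => ∫ t, Phi (clampP t) ∂(ν.1 x)) I01 :=
    Integrable.of_bound hm.aestronglyMeasurable 1
      (Eventually.of_forall (young_abs ν.2.1 phi_clamp_abs))
  have h0 := (integral_eq_zero_iff_of_nonneg
    (fun x => integral_nonneg fun t => phi_nonneg (clampP t)) hi).1 h
  filter_upwards [h0, ν.2.2] with x hx hx2
  have := ν.2.1.2 x
  have h2 := (integral_eq_zero_iff_of_nonneg (fun t => phi_nonneg (clampP t))
    (young_int ν.2.1 phi_clamp_cont phi_clamp_abs x)).1 hx
  refine (mem_ae_iff_prob_eq_one (by measurability)).1 ?_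
  filter_upwards [h2, young_ae hx2] with s hs hs2
  rw [hs2] at hs
  exact (phi_zero_iff s).1 hs

lemma phi_zero_of_supp (ν : YMb)
    (h : ∀ᵐ x ∂(volume.restrict I01), ν.1 x ({-1, 1} : Set ℝ) = 1) :
    (∫ x in I01, ∫ t, Phi t ∂(ν.1 x)) = 0 := by
  refine integral_eq_zero_of_ae ?_
  filter_upwards [h] with x hx
  have := ν.2.1.2 x
  refine integral_eq_zero_of_ae ?_
  filter_upwards [(mem_ae_iff_prob_eq_one (by measurability)).2 hx] with s hs
  exact (phi_zero_iff s).2 hs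

lemma tv_eq (W : ℝ → ℝ → ℝ) (ν : YMb)
    (h : ∀ᵐ x ∂(volume.restrict I01), ν.1 x ({-1, 1} : Set ℝ) = 1) :
    graphonTV W ν.1 = ((graphonDirichlet W ν.1 : ℝ) : EReal) := by
  unfold graphonTV graphonDirichlet
  rw [if_pos h, ← integral_const_mul]
  congr 1
  refine integral_congr_ae ?_
  filter_upwards [h] with x hx
  rw [← integral_const_mul]
  refine integral_congr_ae ?_
  filter_upwards [h] with y hy
  have := ν.2.1.2 x
  have := ν.2.1.2 y
  rw [mul_left_comm, ← integral_const_mul]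
  congr 1
  refine integral_congr_ae ?_
  filter_upwards [(mem_ae_iff_prob_eq_one (by measurability)).2 hy] with t ht
  rw [← integral_const_mul]
  refine integral_congr_ae ?_
  filter_upwards [(mem_ae_iff_prob_eq_one (by measurability)).2 hx] with s hs
  rcases hs with rfl | hs <;> rcases ht with rfl | ht
  · norm_num
  · rw [Set.mem_singleton_iff.1 ht]; norm_num
  · rw [Set.mem_singleton_iff.1 hs]; norm_num
  · rw [Set.mem_singleton_iff.1 hs, Set.mem_singleton_iff.1 ht]; norm_num

/-- For a bounded (`L^∞`) nonnegative symmetric graphon `W`, the graphon Ginzburg–Landau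
functionals `GL^W_{ε_k}` Γ-converge, as `ε_k → 0⁺`, to the graphon total-variation functional
`TV^W`, with respect to narrow convergence of Young measures. -/
theorem graphonGL_gammaConv_graphonTV
    (W : ℝ → ℝ → ℝ) (hWmeas : Measurable (Function.uncurry W))
    (hWnonneg : ∀ x y, 0 ≤ W x y) (hWsymm : ∀ x y, W x y = W y x)
    (hWbdd : ∃ C : ℝ, ∀ x y, W x y ≤ C)
    (ε : ℕ → ℝ) (hεpos : ∀ k, 0 < ε k) (hε : Tendsto ε atTop (nhds 0)) :
    GammaConv (fun (νs : ℕ → YMb) (ν : YMb) => NarrowConv (fun n => (νs n).1) ν.1)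
      (fun k ν => ((graphonGL W (ε k) ν.1 : ℝ) : EReal))
      (fun ν => graphonTV W ν.1) := by
  obtain ⟨C, hWC⟩ := hWbdd
  have hC : ∀ x y, |W x y| ≤ C := fun x y => by
    rw [abs_of_nonneg (hWnonneg x y)]; exact hWC x y
  constructor
  · intro νs ν hconv
    have hD := dirichlet_tendsto hWmeas hC νs ν hconv
    have hP := phi_tendsto νs ν hconv
    by_cases hs : ∀ᵐ x ∂(volume.restrict I01), ν.1 x ({-1, 1} : Set ℝ) = 1
    · show graphonTV W ν.1 ≤ _
      rw [tv_eq W ν hs]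
      have hD' : Tendsto (fun n => ((graphonDirichlet W (νs n).1 : ℝ) : EReal)) atTop
          (nhds ((graphonDirichlet W ν.1 : ℝ) : EReal)) :=
        (continuous_coe_real_ereal.tendsto _).comp hD
      rw [← hD'.liminf_eq]
      refine liminf_le_liminf (Eventually.of_forall fun n => ?_)
      refine EReal.coe_le_coe_iff.2 ?_
      have := mul_nonneg (one_div_pos.2 (hεpos n)).le (phi_int_nonneg (νs n).1)
      unfold graphonGL
      linarith
    · have hpos : 0 < ∫ x in I01, ∫ t, Phi t ∂(ν.1 x) :=
        lt_of_le_of_ne (phi_int_nonneg _) fun h0 => hs (supp_of_phi_zero ν h0.symm)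
      have hinv : Tendsto (fun n => 1 / ε n) atTop atTop := by
        simp only [one_div]
        exact tendsto_inv_nhdsGT_zero.comp
          (tendsto_nhdsWithin_iff.2 ⟨hε, Eventually.of_forall hεpos⟩)
      have hT := hinv.atTop_mul_pos hpos hP
      have hG : Tendsto (fun n => graphonGL W (ε n) (νs n).1) atTop atTop := by
        refine tendsto_atTop_mono (fun n => ?_) hT
        unfold graphonGL
        linarith [dirichlet_nonneg hWnonneg (νs n).1]
      have hE : Tendsto (fun n => ((graphonGL W (ε n) (νs n).1 : ℝ) : EReal)) atTop (nhds ⊤) :=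
        EReal.tendsto_coe_nhds_top_iff.2 hG
      rw [hE.liminf_eq]
      exact le_top
  · intro ν
    refine ⟨fun _ => ν, fun f _ _ g _ => tendsto_const_nhds, ?_⟩
    by_cases hs : ∀ᵐ x ∂(volume.restrict I01), ν.1 x ({-1, 1} : Set ℝ) = 1
    · show _ ≤ graphonTV W ν.1
      rw [tv_eq W ν hs]
      simp only [graphonGL, phi_zero_of_supp ν hs, mul_zero, add_zero]
      rw [limsup_const]
    · show _ ≤ graphonTV W ν.1
      unfold graphonTV
      rw [if_neg hs]
      exact le_top
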